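/- Let f : ℝ² → ℝ be of class C² satisfying (i) D²f(p)(q,q) > 0 for all p, q ∈ ℝ² with q ≠ 0, and (ii) there is a constant Λ > 0 with |D²f(p)| ≤ Λ/(1+|p|) for all p ∈ ℝ². Let u ∈ C²(ℝ²) be an entire solution of div[Df(∇u)] = 0 on ℝ². If there is a constant K > 0 such that |∂₂u(x)| · ln²(1+|∂₂u(x)|) ≤ K(|∂₁u(x)| + 1) for all x ∈ ℝ², then u is an affine function, i.e. there exist a, b, c ∈ ℝ with u(x₁,x₂) = a x₁ + b x₂ + c. -/

import Mathlib

open Real MeasureTheory Metric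
open scoped ENNReal

noncomputable section

/-- `ℝ²` with its Euclidean structure. -/
abbrev E2 : Type := EuclideanSpace ℝ (Fin 2)

/-- The `i`-th standard basis vector of `ℝ²`. -/
def ee (i : Fin 2) : E2 := EuclideanSpace.single i 1

/-- The Hessian bilinear form `D²f(p)(q,q)`. -/
def Hess (f : E2 → ℝ) (p q : E2) : ℝ := iteratedFDeriv ℝ 2 f p ![q, q]

/-- The partial derivative `∂ᵢu(x)`. -/
def pd (u : E2 → ℝ) (i : Fin 2) (x : E2) : ℝ := fderiv ℝ u x (ee i)

/-- The equation `div [Df(∇u)] = 0`, i.e. `∑ i, ∂ᵢ[(∂f/∂pᵢ)(∇u(x))] = 0` on `ℝ²`. -/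
def solves (f u : E2 → ℝ) : Prop :=
  ∀ x : E2, ∑ i : Fin 2, fderiv ℝ (fun y => fderiv ℝ f (gradient u y) (ee i)) x (ee i) = 0

/-!
Differentiating the equation in the direction `e` shows that `v = ∂ₑu` solves the linear equation
`div (A ∇v) = 0` with `A = D²f(∇u)`, in the weak sense because `u` is only `C²`. Testing it with
`η² g(v)`, where `g` is bounded and increasing, and using Cauchy–Schwarz for the form `A` gives
`∫ η² g'(v) A(∇v, ∇v) ≤ C ∫ |∇η|²` as soon as `A ≤ C g'(v)`. For `v = ∂₂u` and `g = arctan ∘ arsinh`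
that bound is exactly what the two growth hypotheses provide, since `g'(t) ~ 1 / (|t| log² |t|)`
for large `|t|`. The plane has zero `2`-capacity, so `∫ |∇η|²` can be made arbitrarily small with
`η = 1` on any given compact set, and `∇∂₂u = 0`.
The equation then reduces to `∂₁∂₁u · D²f(∇u)(e₁, e₁) = 0`, which leaves `D²u = 0`.
-/

open scoped Gradient InnerProductSpace ContDiff

section Capacity

lemma norm_sum_sq_of_pairwise {ι F : Type*} [NormedAddCommGroup F] {s : Finset ι} {v : ι → F}
    (h : (s : Set ι).Pairwise fun i j => v i = 0 ∨ v j = 0) :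
    ‖∑ i ∈ s, v i‖ ^ 2 = ∑ i ∈ s, ‖v i‖ ^ 2 := by
  by_cases hv : ∀ i ∈ s, v i = 0
  · simp +contextual [hv]
  · push Not at hv
    obtain ⟨j, hj, hvj⟩ := hv
    have hzero : ∀ i ∈ s, i ≠ j → v i = 0 := fun i hi hij => (h hi hj hij).resolve_right hvj
    rw [Finset.sum_eq_single_of_mem j hj hzero, Finset.sum_eq_single_of_mem j hj]
    exact fun i hi hij => by simp [hzero i hi hij]

variable {E : Type*} [NormedAddCommGroup E] [NormedSpace ℝ E]

lemma integrable_sq_norm_fderiv [MeasurableSpace E] [BorelSpace E] {μ : Measure E}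
    [IsFiniteMeasureOnCompacts μ] {η : E → ℝ} (hη : ContDiff ℝ 1 η) (hηc : HasCompactSupport η) :
    Integrable (fun x => ‖fderiv ℝ η x‖ ^ 2) μ := by
  have hη' : Continuous fun x => ‖fderiv ℝ η x‖ := (hη.continuous_fderiv one_ne_zero).norm
  simp only [sq]
  exact (hη'.mul hη').integrable_of_hasCompactSupport (hηc.fderiv ℝ).norm.mul_right

variable [FiniteDimensional ℝ E]

variable (E) in
/-- The standard bump function: smooth, equal to `1` on the closed unit ball, and supported in the
closed ball of radius `2`. -/
def stdBump : ContDiffBump (0 : E) := ⟨1, 2, one_pos, one_lt_two⟩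

lemma fderiv_stdBump_eq_zero {x : E} (hx : ‖x‖ < 1 ∨ 2 < ‖x‖) : fderiv ℝ (stdBump E) x = 0 := by
  rcases hx with hx | hx
  · rw [((stdBump E).eventuallyEq_one_of_mem_ball (by simpa [stdBump] using hx)).fderiv_eq]
    exact fderiv_const_apply 1
  · refine image_eq_zero_of_notMem_tsupport fun h => hx.not_ge ?_
    have hx' := tsupport_fderiv_subset ℝ h
    rw [(stdBump E).tsupport_eq] at hx'
    simpa [stdBump] using hx'

/-- The standard bump function rescaled to be `1` on the ball of radius `R` and `0` off the ball of
radius `2 * R`. -/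
def rescaledBump (R : ℝ) (x : E) : ℝ := stdBump E (R⁻¹ • x)

lemma contDiff_rescaledBump (R : ℝ) : ContDiff ℝ ∞ (rescaledBump R : E → ℝ) :=
  (stdBump E).contDiff.comp (contDiff_const_smul _)

lemma hasCompactSupport_rescaledBump {R : ℝ} (hR : R ≠ 0) :
    HasCompactSupport (rescaledBump R : E → ℝ) :=
  (stdBump E).hasCompactSupport.comp_homeomorph (Homeomorph.smulOfNeZero R⁻¹ (inv_ne_zero hR))

lemma rescaledBump_eq_one {R : ℝ} {x : E} (hx : ‖x‖ ≤ R) : rescaledBump R x = 1 := by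
  refine (stdBump E).one_of_mem_closedBall ?_
  have hR : 0 ≤ R := (norm_nonneg x).trans hx
  rw [mem_closedBall_zero_iff, norm_smul, norm_inv, Real.norm_of_nonneg hR]
  exact inv_mul_le_one_of_le₀ hx hR

lemma fderiv_rescaledBump (R : ℝ) (x : E) :
    fderiv ℝ (rescaledBump R) x = R⁻¹ • fderiv ℝ (stdBump E) (R⁻¹ • x) :=
  fderiv_comp_smul (f := (stdBump E : E → ℝ)) R⁻¹

lemma fderiv_rescaledBump_eq_zero {R : ℝ} (hR : 0 < R) {x : E} (hx : ‖x‖ < R ∨ 2 * R < ‖x‖) :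
    fderiv ℝ (rescaledBump R) x = 0 := by
  rw [fderiv_rescaledBump, fderiv_stdBump_eq_zero, smul_zero]
  rw [norm_smul, norm_inv, Real.norm_of_nonneg hR.le]
  exact hx.imp (inv_mul_lt_one₀ hR).2 fun h => by rwa [lt_inv_mul_iff₀ hR, mul_comm]

lemma fderiv_rescaledBump_eq_zero_or {R R' : ℝ} (hR : 0 < R) (hRR' : 2 * R < R') (x : E) :
    fderiv ℝ (rescaledBump R) x = 0 ∨ fderiv ℝ (rescaledBump R') x = 0 := by
  rcases lt_or_ge ‖x‖ R' with hx | hx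
  · exact .inr (fderiv_rescaledBump_eq_zero (by linarith) (.inl hx))
  · exact .inl (fderiv_rescaledBump_eq_zero hR (.inr (hRR'.trans_le hx)))

/-- The average of `N` standard bumps rescaled by `R, 4 * R, 16 * R, …`. Their gradients live in
disjoint annuli, which makes the Dirichlet energy of the average of order `1 / N`. -/
def averagedBump (R : ℝ) (N : ℕ) (x : E) : ℝ :=
  (N : ℝ)⁻¹ * ∑ j ∈ Finset.range N, rescaledBump (R * 4 ^ j) x

lemma contDiff_averagedBump (R : ℝ) (N : ℕ) : ContDiff ℝ ∞ (averagedBump R N : E → ℝ) :=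
  contDiff_const.mul <| ContDiff.sum fun _ _ => contDiff_rescaledBump _

lemma hasCompactSupport_averagedBump {R : ℝ} (hR : R ≠ 0) (N : ℕ) :
    HasCompactSupport (averagedBump R N : E → ℝ) :=
  HasCompactSupport.intro
    ((Finset.range N).isCompact_biUnion fun j _ =>
      (hasCompactSupport_rescaledBump (show R * 4 ^ j ≠ 0 by positivity)).isCompact)
    fun x hx => by
      have hzero : ∀ j ∈ Finset.range N, rescaledBump (R * 4 ^ j) x = 0 := fun j hj =>
        image_eq_zero_of_notMem_tsupport fun h => hx (Set.mem_biUnion hj h)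
      simp [averagedBump, Finset.sum_eq_zero hzero]

lemma averagedBump_eq_one {R : ℝ} {N : ℕ} (hN : N ≠ 0) {x : E} (hx : ‖x‖ ≤ R) :
    averagedBump R N x = 1 := by
  have hR : 0 ≤ R := (norm_nonneg x).trans hx
  have hone : ∀ j ∈ Finset.range N, rescaledBump (R * 4 ^ j) x = 1 := fun j _ =>
    rescaledBump_eq_one <| hx.trans <| le_mul_of_one_le_right hR <| one_le_pow₀ (by norm_num)
  simp [averagedBump, Finset.sum_congr rfl hone, hN]

lemma sq_norm_fderiv_averagedBump {R : ℝ} (hR : 0 < R) (N : ℕ) (x : E) :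
    ‖fderiv ℝ (averagedBump R N) x‖ ^ 2 =
      (N : ℝ)⁻¹ ^ 2 * ∑ j ∈ Finset.range N, ‖fderiv ℝ (rescaledBump (R * 4 ^ j)) x‖ ^ 2 := by
  have hdiff : ∀ r : ℝ, DifferentiableAt ℝ (rescaledBump r) x := fun r =>
    (contDiff_rescaledBump r).differentiable (by simp) x
  have hlt : ∀ i j : ℕ, i < j → 2 * (R * 4 ^ i) < R * 4 ^ j := fun i j hij => by
    have : (4 : ℝ) ^ (i + 1) ≤ 4 ^ j := pow_le_pow_right₀ (by norm_num) hij
    have : (0 : ℝ) < 4 ^ i := by positivity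
    calc 2 * (R * 4 ^ i) < R * 4 ^ (i + 1) := by rw [pow_succ]; nlinarith
      _ ≤ R * 4 ^ j := by gcongr
  have hdisj : ((Finset.range N : Finset ℕ) : Set ℕ).Pairwise fun i j =>
      fderiv ℝ (rescaledBump (R * 4 ^ i)) x = 0 ∨ fderiv ℝ (rescaledBump (R * 4 ^ j)) x = 0 := by
    intro i _ j _ hij
    rcases hij.lt_or_gt with hij | hij
    · exact fderiv_rescaledBump_eq_zero_or (by positivity) (hlt i j hij) x
    · exact (fderiv_rescaledBump_eq_zero_or (by positivity) (hlt j i hij) x).symm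
  have hfderiv : fderiv ℝ (averagedBump R N) x =
      (N : ℝ)⁻¹ • ∑ j ∈ Finset.range N, fderiv ℝ (rescaledBump (R * 4 ^ j)) x := by
    rw [← fderiv_fun_sum fun j _ => hdiff _]
    exact fderiv_const_mul (DifferentiableAt.fun_sum fun j _ => hdiff _) _
  rw [hfderiv, norm_smul, mul_pow, norm_sum_sq_of_pairwise hdisj, norm_inv, Real.norm_natCast]

variable [MeasurableSpace E] [BorelSpace E] (μ : Measure E) [μ.IsAddHaarMeasure]

lemma integral_sq_norm_fderiv_rescaledBump_le (hE : Module.finrank ℝ E ≤ 2) {R : ℝ} (hR : 1 ≤ R) :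
    ∫ x, ‖fderiv ℝ (rescaledBump R) x‖ ^ 2 ∂μ ≤ ∫ x, ‖fderiv ℝ (stdBump E) x‖ ^ 2 ∂μ := by
  have hR₀ : 0 < R := one_pos.trans_le hR
  have hscale : R⁻¹ ^ 2 * R ^ Module.finrank ℝ E ≤ 1 := by
    rw [inv_pow, inv_mul_le_one₀ (by positivity)]
    exact pow_le_pow_right₀ hR hE
  calc ∫ x, ‖fderiv ℝ (rescaledBump R) x‖ ^ 2 ∂μ
      = R⁻¹ ^ 2 * ∫ x, ‖fderiv ℝ (stdBump E) (R⁻¹ • x)‖ ^ 2 ∂μ := by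
        simp only [fderiv_rescaledBump, norm_smul, mul_pow, norm_inv, Real.norm_of_nonneg hR₀.le,
          integral_const_mul]
    _ = R⁻¹ ^ 2 * R ^ Module.finrank ℝ E * ∫ x, ‖fderiv ℝ (stdBump E) x‖ ^ 2 ∂μ := by
        rw [Measure.integral_comp_inv_smul_of_nonneg μ
          (fun x => ‖fderiv ℝ (stdBump E) x‖ ^ 2) hR₀.le, smul_eq_mul, mul_assoc]
    _ ≤ ∫ x, ‖fderiv ℝ (stdBump E) x‖ ^ 2 ∂μ :=
        mul_le_of_le_one_left (integral_nonneg fun _ => by positivity) hscale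

lemma integral_sq_norm_fderiv_averagedBump_le (hE : Module.finrank ℝ E ≤ 2) {R : ℝ} (hR : 1 ≤ R)
    (N : ℕ) :
    ∫ x, ‖fderiv ℝ (averagedBump R N) x‖ ^ 2 ∂μ ≤ (∫ x, ‖fderiv ℝ (stdBump E) x‖ ^ 2 ∂μ) / N := by
  have hR₀ : 0 < R := one_pos.trans_le hR
  set I := ∫ x, ‖fderiv ℝ (stdBump E) x‖ ^ 2 ∂μ
  calc ∫ x, ‖fderiv ℝ (averagedBump R N) x‖ ^ 2 ∂μ
      = (N : ℝ)⁻¹ ^ 2 *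
          ∑ j ∈ Finset.range N, ∫ x, ‖fderiv ℝ (rescaledBump (R * 4 ^ j)) x‖ ^ 2 ∂μ := by
        simp only [sq_norm_fderiv_averagedBump hR₀]
        rw [integral_const_mul, integral_finsetSum _ fun j _ => integrable_sq_norm_fderiv
          ((contDiff_rescaledBump _).of_le (mod_cast le_top))
          (hasCompactSupport_rescaledBump (by positivity))]
    _ ≤ (N : ℝ)⁻¹ ^ 2 * ∑ _j ∈ Finset.range N, I := by
        gcongr with j
        exact integral_sq_norm_fderiv_rescaledBump_le μ hE <|
          one_le_mul_of_one_le_of_one_le hR (one_le_pow₀ (by norm_num))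
    _ = I / N := by
        rcases eq_or_ne N 0 with rfl | hN
        · simp
        · simp only [Finset.sum_const, Finset.card_range, nsmul_eq_mul]
          field_simp

theorem exists_eq_one_integral_sq_norm_fderiv_le (hE : Module.finrank ℝ E ≤ 2) {K : Set E}
    (hK : IsCompact K) {ε : ℝ} (hε : 0 < ε) :
    ∃ η : E → ℝ, ContDiff ℝ ∞ η ∧ HasCompactSupport η ∧ (∀ x ∈ K, η x = 1) ∧
      ∫ x, ‖fderiv ℝ η x‖ ^ 2 ∂μ ≤ ε := by
  obtain ⟨R, hR, hKR⟩ := hK.isBounded.exists_pos_norm_le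
  obtain ⟨N, hN⟩ := exists_nat_gt ((∫ x, ‖fderiv ℝ (stdBump E) x‖ ^ 2 ∂μ) / ε)
  have hN₀ : 0 < (N : ℝ) := (div_nonneg (integral_nonneg fun _ => by positivity) hε.le).trans_lt hN
  refine ⟨averagedBump (max R 1) N, contDiff_averagedBump _ N,
    hasCompactSupport_averagedBump (by positivity) N,
    fun x hx => averagedBump_eq_one (mod_cast hN₀.ne') ((hKR x hx).trans (le_max_left R 1)), ?_⟩
  refine (integral_sq_norm_fderiv_averagedBump_le μ hE (le_max_right R 1) N).trans ?_
  rw [div_le_iff₀ hN₀, ← div_le_iff₀' hε]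
  exact hN.le

theorem eq_zero_of_forall_integral_sq_mul_le (hE : Module.finrank ℝ E ≤ 2) {ψ : E → ℝ}
    (hψ : Continuous ψ) (hψ₀ : ∀ x, 0 ≤ ψ x) {C : ℝ}
    (h : ∀ η : E → ℝ, ContDiff ℝ 1 η → HasCompactSupport η →
      ∫ x, η x ^ 2 * ψ x ∂μ ≤ C * ∫ x, ‖fderiv ℝ η x‖ ^ 2 ∂μ) (x : E) : ψ x = 0 := by
  by_contra hx
  have hcont : ∀ η : E → ℝ, Continuous η → Continuous fun y => η y ^ 2 * ψ y := fun η hη =>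
    (hη.pow 2).mul hψ
  have hsupp : ∀ η : E → ℝ, HasCompactSupport η → HasCompactSupport fun y => η y ^ 2 * ψ y :=
    fun η hηc => by
      simp only [sq, mul_assoc]
      exact hηc.mul_right
  let b : ContDiffBump x := default
  have hb : HasCompactSupport b := b.hasCompactSupport
  have hmass : 0 < ∫ y, b y ^ 2 * ψ y ∂μ :=
    (hcont b b.continuous).integral_pos_of_hasCompactSupport_nonneg_nonzero (hsupp b hb)
      (fun y => mul_nonneg (sq_nonneg _) (hψ₀ y)) (x := x)
      (by simp [b.eventuallyEq_one.eq_of_nhds, hx])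
  set m := ∫ y, b y ^ 2 * ψ y ∂μ
  have hε : 0 < m / (2 * (|C| + 1)) := by positivity
  obtain ⟨η, hη, hηc, hη₁, hηle⟩ := exists_eq_one_integral_sq_norm_fderiv_le μ hE hb hε
  have hbη : ∀ y, b y ^ 2 * ψ y ≤ η y ^ 2 * ψ y := fun y => by
    by_cases hy : y ∈ tsupport b
    · rw [hη₁ y hy, one_pow]
      exact mul_le_mul_of_nonneg_right (pow_le_one₀ b.nonneg b.le_one) (hψ₀ y)
    · rw [image_eq_zero_of_notMem_tsupport hy]
      simpa using mul_nonneg (sq_nonneg (η y)) (hψ₀ y)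
  have hη' : ContDiff ℝ 1 η := hη.of_le (mod_cast le_top)
  have : m ≤ m / 2 := calc
    m ≤ ∫ y, η y ^ 2 * ψ y ∂μ := integral_mono
      ((hcont b b.continuous).integrable_of_hasCompactSupport (hsupp b hb))
      ((hcont η hη.continuous).integrable_of_hasCompactSupport (hsupp η hηc)) hbη
    _ ≤ C * ∫ y, ‖fderiv ℝ η y‖ ^ 2 ∂μ := h η hη' hηc
    _ ≤ (|C| + 1) * (m / (2 * (|C| + 1))) :=
      mul_le_mul ((le_abs_self C).trans (by linarith)) hηle (integral_nonneg fun _ => by positivity)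
        (by positivity)
    _ = m / 2 := by field_simp
  linarith

end Capacity

section Gradient

variable {E : Type*} [NormedAddCommGroup E] [InnerProductSpace ℝ E] [CompleteSpace E]

lemma contDiff_gradient {u : E → ℝ} {m n : WithTop ℕ∞} (hu : ContDiff ℝ n u)
    (hmn : m + 1 ≤ n) : ContDiff ℝ m (∇ u) :=
  (InnerProductSpace.toDual ℝ E).symm.toContinuousLinearEquiv.contDiff.comp (hu.fderiv_right hmn)

lemma hasCompactSupport_gradient {φ : E → ℝ} (hφ : HasCompactSupport φ) :
    HasCompactSupport (∇ φ) :=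
  (hφ.fderiv ℝ).comp_left (map_zero (InnerProductSpace.toDual ℝ E).symm)

lemma norm_gradient (u : E → ℝ) (x : E) : ‖∇ u x‖ = ‖fderiv ℝ u x‖ :=
  (InnerProductSpace.toDual ℝ E).symm.norm_map _

lemma inner_fderiv_gradient (u : E → ℝ) (x a b : E) :
    ⟪fderiv ℝ (∇ u) x a, b⟫_ℝ = fderiv ℝ (fderiv ℝ u) x a b := by
  have hcomp : fderiv ℝ (∇ u) x =
      (InnerProductSpace.toDual ℝ E).symm.toContinuousLinearEquiv.toContinuousLinearMap ∘L
        fderiv ℝ (fderiv ℝ u) x :=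
    (InnerProductSpace.toDual ℝ E).symm.toContinuousLinearEquiv.comp_fderiv
  rw [hcomp]
  exact InnerProductSpace.toDual_symm_apply

lemma inner_fderiv_gradient_comm {u : E → ℝ} (hu : ContDiff ℝ 2 u) (x a b : E) :
    ⟪fderiv ℝ (∇ u) x a, b⟫_ℝ = ⟪fderiv ℝ (∇ u) x b, a⟫_ℝ := by
  rw [inner_fderiv_gradient, inner_fderiv_gradient]
  exact hu.contDiffAt.isSymmSndFDerivAt (by simp) a b

lemma gradient_fderiv_apply {u : E → ℝ} (hu : ContDiff ℝ 2 u) (x e : E) :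
    ∇ (fun y => fderiv ℝ u y e) x = fderiv ℝ (∇ u) x e := by
  have hd : DifferentiableAt ℝ (fderiv ℝ u) x :=
    (hu.fderiv_right (m := 1) (by norm_num)).differentiable one_ne_zero x
  refine ext_inner_right ℝ fun a => ?_
  rw [inner_gradient_left, inner_fderiv_gradient_comm hu, inner_fderiv_gradient,
    fderiv_clm_apply hd (differentiableAt_const e)]
  simp

lemma gradient_sq_mul_comp {η v : E → ℝ} {g : ℝ → ℝ} {x : E}
    (hη : DifferentiableAt ℝ η x) (hv : DifferentiableAt ℝ v x) (hg : DifferentiableAt ℝ g (v x)) :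
    ∇ (fun y => η y ^ 2 * g (v y)) x =
      (η x ^ 2 * deriv g (v x)) • ∇ v x + (2 * η x * g (v x)) • ∇ η x := by
  have h : HasFDerivAt (fun y => η y ^ 2 * g (v y)) _ x :=
    (hη.hasFDerivAt.pow 2).mul (hg.hasDerivAt.comp_hasFDerivAt x hv.hasFDerivAt)
  refine ext_inner_right ℝ fun a => ?_
  rw [inner_gradient_left, h.fderiv]
  simp [inner_add_left, inner_smul_left, inner_gradient_left]
  ring

lemma fderiv_fderiv_comp_gradient {f u : E → ℝ} (hf : ContDiff ℝ 2 f) (hu : ContDiff ℝ 2 u)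
    (x a : E) :
    fderiv ℝ (fun y => fderiv ℝ f (∇ u y)) x a =
      fderiv ℝ (fderiv ℝ f) (∇ u x) (fderiv ℝ (∇ u) x a) := by
  have hf' : DifferentiableAt ℝ (fderiv ℝ f) (∇ u x) :=
    (hf.fderiv_right (m := 1) (by norm_num)).differentiable one_ne_zero _
  have hu' : DifferentiableAt ℝ (∇ u) x :=
    (contDiff_gradient (m := 1) hu (by norm_num)).differentiable one_ne_zero x
  exact congrArg (· a) (fderiv_comp x hf' hu')

lemma eq_inner_add_of_gradient_eq {u : E → ℝ} (hu : Differentiable ℝ u) {p : E}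
    (h : ∀ x, ∇ u x = p) (x : E) : u x = ⟪p, x⟫_ℝ + u 0 := by
  have hderiv : ∀ y, HasFDerivAt (fun z => u z - ⟪p, z⟫_ℝ) (0 : E →L[ℝ] ℝ) y := fun y => by
    have hu' : HasFDerivAt u (innerSL ℝ p) y := h y ▸ (hu y).hasGradientAt.hasFDerivAt
    have hsub := hu'.fun_sub (innerSL ℝ p).hasFDerivAt
    rw [sub_self] at hsub
    exact hsub
  have hconst := is_const_of_fderiv_eq_zero (fun y => (hderiv y).differentiableAt)
    (fun y => (hderiv y).fderiv) x 0
  simp only [inner_zero_right, sub_zero] at hconst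
  linarith

end Gradient

section WeakDivergence

variable {E : Type*} [NormedAddCommGroup E] [MeasurableSpace E] [BorelSpace E]

lemma hasDerivAt_integral_apply_add_smul {F G : Type*} [NormedSpace ℝ E] [FiniteDimensional ℝ E]
    [NormedAddCommGroup F] [NormedSpace ℝ F] [NormedAddCommGroup G] [NormedSpace ℝ G]
    {μ : Measure E} [IsFiniteMeasureOnCompacts μ] {J : E → F →L[ℝ] G} {X : E → F}
    (hJ : ContDiff ℝ 1 J) (hX : Continuous X) (hXc : HasCompactSupport X) (e : E) :
    HasDerivAt (fun t : ℝ => ∫ x, J (x + t • e) (X x) ∂μ) (∫ x, fderiv ℝ J x e (X x) ∂μ) 0 := by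
  have hJX : ∀ t : ℝ, Continuous fun x => J (x + t • e) (X x) := fun t =>
    (hJ.continuous.comp (by fun_prop)).clm_apply hX
  have hJX_int : Integrable (fun x => J (x + (0 : ℝ) • e) (X x)) μ :=
    (hJX 0).integrable_of_hasCompactSupport <| HasCompactSupport.intro hXc fun x hx => by
      rw [image_eq_zero_of_notMem_tsupport hx, map_zero]
  have hJ'X : Continuous fun z : ℝ × E => fderiv ℝ J (z.2 + z.1 • e) e (X z.2) :=
    (((hJ.continuous_fderiv one_ne_zero).comp (by fun_prop)).clm_apply continuous_const).clm_apply
      (hX.comp continuous_snd)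
  have hJ'X₀ : Continuous fun x => fderiv ℝ J (x + (0 : ℝ) • e) e (X x) :=
    hJ'X.comp (Continuous.prodMk_right (0 : ℝ))
  obtain ⟨M, hM⟩ := ((isCompact_closedBall (0 : ℝ) 1).prod hXc).exists_bound_of_continuousOn
    hJ'X.continuousOn
  have hbound : ∀ x, ∀ t ∈ closedBall (0 : ℝ) 1,
      ‖fderiv ℝ J (x + t • e) e (X x)‖ ≤ (tsupport X).indicator (fun _ => M) x := fun x t ht => by
    by_cases hx : x ∈ tsupport X
    · rw [Set.indicator_of_mem hx]
      exact hM (t, x) ⟨ht, hx⟩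
    · simp [image_eq_zero_of_notMem_tsupport hx, hx]
  have hM_int : Integrable ((tsupport X).indicator fun _ => M) μ :=
    (integrable_indicator_iff (isClosed_tsupport X).measurableSet).2
      (integrableOn_const hXc.measure_lt_top.ne)
  have hderiv : ∀ x, ∀ t ∈ closedBall (0 : ℝ) 1, HasDerivAt (fun t : ℝ => J (x + t • e) (X x))
      (fderiv ℝ J (x + t • e) e (X x)) t := fun x t _ => by
    have hline : HasDerivAt (fun s : ℝ => x + s • e) e t := by
      simpa using ((hasDerivAt_id t).smul_const e).const_add x
    have hcomp := (hJ.differentiable one_ne_zero _).hasFDerivAt.comp_hasDerivAt t hline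
    simpa using hcomp.clm_apply (hasDerivAt_const t (X x))
  simpa using (hasDerivAt_integral_of_dominated_loc_of_deriv_le (closedBall_mem_nhds 0 one_pos)
    (.of_forall fun t => (hJX t).aestronglyMeasurable) hJX_int
    hJ'X₀.aestronglyMeasurable (.of_forall hbound) hM_int (.of_forall hderiv)).2

variable [InnerProductSpace ℝ E] [FiniteDimensional ℝ E] {μ : Measure E}

/-- A covector field `J` has zero divergence in the sense of distributions, where covectors are
identified with vectors through the inner product. For continuous `J` the integrands are continuous
with compact support, so no junk value of the integral is involved. -/
def IsWeaklyDivFree (J : E → E →L[ℝ] ℝ) (μ : Measure E) : Prop :=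
  ∀ φ : E → ℝ, ContDiff ℝ 1 φ → HasCompactSupport φ → ∫ x, J x (∇ φ x) ∂μ = 0

variable [μ.IsAddHaarMeasure]

theorem isWeaklyDivFree_of_sum_fderiv_eq_zero {ι : Type*} [Fintype ι] (b : OrthonormalBasis ι ℝ E)
    {J : E → E →L[ℝ] ℝ} (hJ : ContDiff ℝ 1 J) (hdiv : ∀ x, ∑ i, fderiv ℝ J x (b i) (b i) = 0) :
    IsWeaklyDivFree J μ := by
  intro φ hφ hφc
  have hJb : ∀ i, ContDiff ℝ 1 fun x => J x (b i) := fun i => hJ.clm_apply contDiff_const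
  have hJb' : ∀ i x, fderiv ℝ (fun y => J y (b i)) x (b i) = fderiv ℝ J x (b i) (b i) :=
    fun i x => by
      rw [fderiv_clm_apply (hJ.differentiable one_ne_zero x) (differentiableAt_const _)]
      simp
  have hint : ∀ i, Integrable (fun x => J x (b i) * fderiv ℝ φ x (b i)) μ := fun i =>
    ((hJb i).continuous.mul ((hφ.continuous_fderiv one_ne_zero).clm_apply
      continuous_const)).integrable_of_hasCompactSupport (hφc.fderiv_apply ℝ (b i)).mul_left
  have hint' : ∀ i, Integrable (fun x => fderiv ℝ (fun y => J y (b i)) x (b i) * φ x) μ := fun i =>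
    ((((hJb i).continuous_fderiv one_ne_zero).clm_apply continuous_const).mul
      hφ.continuous).integrable_of_hasCompactSupport hφc.mul_left
  have hparts : ∀ i, ∫ x, J x (b i) * fderiv ℝ φ x (b i) ∂μ =
      -∫ x, fderiv ℝ (fun y => J y (b i)) x (b i) * φ x ∂μ := fun i =>
    integral_mul_fderiv_eq_neg_fderiv_mul_of_integrable (hint' i) (hint i)
      (((hJb i).continuous.mul hφ.continuous).integrable_of_hasCompactSupport hφc.mul_left)
      (fun x _ => (hJb i).differentiable one_ne_zero x)
      (fun x _ => hφ.differentiable one_ne_zero x)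
  have hexpand : ∀ x, J x (∇ φ x) = ∑ i, J x (b i) * fderiv ℝ φ x (b i) := fun x => by
    conv_lhs => rw [← b.sum_repr' (∇ φ x)]
    simp [inner_gradient_right, mul_comm]
  calc ∫ x, J x (∇ φ x) ∂μ = ∑ i, ∫ x, J x (b i) * fderiv ℝ φ x (b i) ∂μ := by
        simp only [hexpand]
        exact integral_finsetSum _ fun i _ => hint i
    _ = -∫ x, (∑ i, fderiv ℝ J x (b i) (b i)) * φ x ∂μ := by
        simp only [hparts, Finset.sum_neg_distrib, Finset.sum_mul, ← hJb']
        rw [integral_finsetSum _ fun i _ => hint' i]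
    _ = 0 := by simp [hdiv]

lemma isWeaklyDivFree_comp_add_right {J : E → E →L[ℝ] ℝ} (h : IsWeaklyDivFree J μ) (a : E) :
    IsWeaklyDivFree (fun x => J (x + a)) μ := by
  intro φ hφ hφc
  have hgrad : ∀ x, ∇ (fun y => φ (y - a)) (x + a) = ∇ φ x := fun x => by
    simp [gradient, fderiv_comp_sub]
  have := h (fun y => φ (y - a)) (hφ.comp (contDiff_id.sub contDiff_const))
    (hφc.comp_homeomorph (Homeomorph.subRight a))
  rw [← integral_add_right_eq_self _ a] at this
  simpa only [hgrad] using this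

theorem isWeaklyDivFree_fderiv_apply {J : E → E →L[ℝ] ℝ} (hJ : ContDiff ℝ 1 J)
    (h : IsWeaklyDivFree J μ) (e : E) : IsWeaklyDivFree (fun x => fderiv ℝ J x e) μ := by
  intro φ hφ hφc
  have hderiv := hasDerivAt_integral_apply_add_smul (μ := μ) hJ
    (contDiff_gradient (m := 0) hφ (by simp)).continuous (hasCompactSupport_gradient hφc) e
  have hzero : ∀ t : ℝ, ∫ x, J (x + t • e) (∇ φ x) ∂μ = 0 := fun t =>
    isWeaklyDivFree_comp_add_right h (t • e) φ hφ hφc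
  simp only [hzero] at hderiv
  exact hderiv.unique (hasDerivAt_const _ _)

end WeakDivergence

section Caccioppoli

variable {E : Type*} [NormedAddCommGroup E] [InnerProductSpace ℝ E]

lemma le_two_mul_add_of_form_nonneg {B : E →L[ℝ] E →L[ℝ] ℝ} (hsymm : ∀ a b, B a b = B b a)
    (hnonneg : ∀ a, 0 ≤ B a a) {w z : E} {k g M C : ℝ} (hk : 0 < k) (hg : |g| ≤ M)
    (hle : B z z ≤ C * k * ‖z‖ ^ 2) (η : ℝ) :
    η ^ 2 * (k * B w w) ≤
      2 * B w ((η ^ 2 * k) • w + (2 * η * g) • z) + 4 * M ^ 2 * C * ‖z‖ ^ 2 := by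
  have hform := hnonneg ((k * η) • w + (2 * g) • z)
  have hsq : g ^ 2 ≤ M ^ 2 := sq_le_sq' (neg_le_of_abs_le hg) (le_of_abs_le hg)
  have hgM : g ^ 2 * B z z ≤ M ^ 2 * (C * k * ‖z‖ ^ 2) :=
    mul_le_mul hsq hle (hnonneg z) (sq_nonneg M)
  simp only [map_add, map_smul, add_apply, smul_apply, smul_eq_mul, hsymm z w] at hform ⊢
  refine le_of_mul_le_mul_left ?_ hk
  linarith

variable [FiniteDimensional ℝ E] [MeasurableSpace E] [BorelSpace E] {μ : Measure E}
  {A : E → E →L[ℝ] E →L[ℝ] ℝ} {v : E → ℝ} {g : ℝ → ℝ} {M C : ℝ}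

theorem integral_sq_mul_deriv_mul_le [IsFiniteMeasureOnCompacts μ] (hA : Continuous A)
    (hsymm : ∀ x a b, A x a b = A x b a) (hnonneg : ∀ x a, 0 ≤ A x a a) (hv : ContDiff ℝ 1 v)
    (hdiv : IsWeaklyDivFree (fun x => A x (∇ v x)) μ) (hg : ContDiff ℝ 1 g)
    (hg' : ∀ t, 0 < deriv g t) (hgM : ∀ t, |g t| ≤ M)
    (hle : ∀ x a, A x a a ≤ C * deriv g (v x) * ‖a‖ ^ 2) {η : E → ℝ} (hη : ContDiff ℝ 1 η)
    (hηc : HasCompactSupport η) :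
    ∫ x, η x ^ 2 * (deriv g (v x) * A x (∇ v x) (∇ v x)) ∂μ ≤
      4 * M ^ 2 * C * ∫ x, ‖fderiv ℝ η x‖ ^ 2 ∂μ := by
  set φ : E → ℝ := fun x => η x ^ 2 * g (v x) with hφ_def
  have hφ : ContDiff ℝ 1 φ := (hη.pow 2).mul (hg.comp hv)
  have hφc : HasCompactSupport φ := by
    simp only [hφ_def, sq, mul_assoc]
    exact hηc.mul_right
  have hgrad : ∀ {h : E → ℝ}, ContDiff ℝ 1 h → Continuous (∇ h) := fun hh =>
    (contDiff_gradient (m := 0) hh (by simp)).continuous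
  have hflux : Continuous fun x => A x (∇ v x) := hA.clm_apply (hgrad hv)
  have hint_energy : Integrable (fun x => η x ^ 2 * (deriv g (v x) * A x (∇ v x) (∇ v x))) μ := by
    simp only [sq, mul_assoc]
    exact (hη.continuous.mul (hη.continuous.mul (((hg.continuous_deriv le_rfl).comp
      hv.continuous).mul (hflux.clm_apply (hgrad hv))))).integrable_of_hasCompactSupport
      hηc.mul_right
  have hint_test : Integrable (fun x => A x (∇ v x) (∇ φ x)) μ :=
    (hflux.clm_apply (hgrad hφ)).integrable_of_hasCompactSupport <|
      HasCompactSupport.intro (hasCompactSupport_gradient hφc) fun x hx => by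
        rw [image_eq_zero_of_notMem_tsupport hx, map_zero]
  have hint_grad := integrable_sq_norm_fderiv (μ := μ) hη hηc
  have hpoint : ∀ x, η x ^ 2 * (deriv g (v x) * A x (∇ v x) (∇ v x)) ≤
      2 * A x (∇ v x) (∇ φ x) + 4 * M ^ 2 * C * ‖fderiv ℝ η x‖ ^ 2 := fun x => by
    rw [gradient_sq_mul_comp (hη.differentiable one_ne_zero x) (hv.differentiable one_ne_zero x)
      (hg.differentiable one_ne_zero _), ← norm_gradient]
    exact le_two_mul_add_of_form_nonneg (hsymm x) (hnonneg x) (hg' _) (hgM _) (hle x _) _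
  calc ∫ x, η x ^ 2 * (deriv g (v x) * A x (∇ v x) (∇ v x)) ∂μ
      ≤ ∫ x, (2 * A x (∇ v x) (∇ φ x) + 4 * M ^ 2 * C * ‖fderiv ℝ η x‖ ^ 2) ∂μ :=
        integral_mono hint_energy ((hint_test.const_mul _).add (hint_grad.const_mul _)) hpoint
    _ = 4 * M ^ 2 * C * ∫ x, ‖fderiv ℝ η x‖ ^ 2 ∂μ := by
        rw [integral_add (hint_test.const_mul _) (hint_grad.const_mul _), integral_const_mul,
          integral_const_mul, hdiv φ hφ hφc, mul_zero, zero_add]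

theorem gradient_eq_zero_of_isWeaklyDivFree [μ.IsAddHaarMeasure] (hE : Module.finrank ℝ E ≤ 2)
    (hA : Continuous A) (hsymm : ∀ x a b, A x a b = A x b a) (hpos : ∀ x a, a ≠ 0 → 0 < A x a a)
    (hv : ContDiff ℝ 1 v) (hdiv : IsWeaklyDivFree (fun x => A x (∇ v x)) μ) (hg : ContDiff ℝ 1 g)
    (hg' : ∀ t, 0 < deriv g t) (hgM : ∀ t, |g t| ≤ M)
    (hle : ∀ x a, A x a a ≤ C * deriv g (v x) * ‖a‖ ^ 2) (x : E) : ∇ v x = 0 := by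
  have hnonneg : ∀ x a, 0 ≤ A x a a := fun x a => by
    rcases eq_or_ne a 0 with rfl | ha
    · simp
    · exact (hpos x a ha).le
  have hgrad : Continuous (∇ v) := (contDiff_gradient (m := 0) hv (by simp)).continuous
  have henergy : deriv g (v x) * A x (∇ v x) (∇ v x) = 0 :=
    eq_zero_of_forall_integral_sq_mul_le μ hE
      (((hg.continuous_deriv le_rfl).comp hv.continuous).mul
        ((hA.clm_apply hgrad).clm_apply hgrad))
      (fun y => mul_nonneg (hg' _).le (hnonneg y _))
      (fun _ => integral_sq_mul_deriv_mul_le hA hsymm hnonneg hv hdiv hg hg' hgM hle) x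
  by_contra hne
  exact (mul_pos (hg' _) (hpos x _ hne)).ne' henergy

end Caccioppoli

section EulerLagrange

variable {E : Type*} [NormedAddCommGroup E] [InnerProductSpace ℝ E]

lemma eq_zero_of_sum_form_eq_zero (b : OrthonormalBasis (Fin 2) ℝ E)
    {B : E →L[ℝ] E →L[ℝ] ℝ} (hB : ∀ a, a ≠ 0 → 0 < B a a) {T : E →L[ℝ] E}
    (hT : (T : E →ₗ[ℝ] E).IsSymmetric) (hsum : ∑ i, B (T (b i)) (b i) = 0) (hT₁ : T (b 1) = 0) :
    T = 0 := by
  have hTb : T (b 0) = ⟪b 0, T (b 0)⟫_ℝ • b 0 := by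
    have h10 : ⟪b 1, T (b 0)⟫_ℝ = 0 := by
      rw [← ContinuousLinearMap.coe_coe, ← hT]
      simp [hT₁]
    conv_lhs => rw [← b.sum_repr' (T (b 0)), Fin.sum_univ_two, h10, zero_smul, add_zero]
  have hT₀ : T (b 0) = 0 := by
    rw [Fin.sum_univ_two, hT₁, hTb] at hsum
    simp only [map_smul, smul_apply, smul_eq_mul, map_zero, zero_apply, add_zero] at hsum
    rw [hTb, (mul_eq_zero.1 hsum).resolve_right (hB _ (b.orthonormal.ne_zero 0)).ne', zero_smul]
  refine ContinuousLinearMap.coe_injective (b.toBasis.ext fun i => ?_)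
  fin_cases i <;> simp [hT₀, hT₁]

variable [FiniteDimensional ℝ E] [MeasurableSpace E] [BorelSpace E] {μ : Measure E}
  [μ.IsAddHaarMeasure] {f u : E → ℝ} {g : ℝ → ℝ} {M C : ℝ}

theorem fderiv_gradient_apply_eq_zero (hE : Module.finrank ℝ E ≤ 2) (hf : ContDiff ℝ 2 f)
    (hpos : ∀ p a, a ≠ 0 → 0 < fderiv ℝ (fderiv ℝ f) p a a) (hu : ContDiff ℝ 2 u)
    (hdiv : IsWeaklyDivFree (fun x => fderiv ℝ f (∇ u x)) μ) (e : E) (hg : ContDiff ℝ 1 g)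
    (hg' : ∀ t, 0 < deriv g t) (hgM : ∀ t, |g t| ≤ M)
    (hle : ∀ x a, fderiv ℝ (fderiv ℝ f) (∇ u x) a a ≤ C * deriv g (fderiv ℝ u x e) * ‖a‖ ^ 2)
    (x : E) : fderiv ℝ (∇ u) x e = 0 := by
  have hDf : ContDiff ℝ 1 (fderiv ℝ f) := hf.fderiv_right (by norm_num)
  have hgrad : ContDiff ℝ 1 (∇ u) := contDiff_gradient hu (by norm_num)
  have hlin : IsWeaklyDivFree (fun x =>
      fderiv ℝ (fderiv ℝ f) (∇ u x) (∇ (fun y => fderiv ℝ u y e) x)) μ := by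
    simpa only [gradient_fderiv_apply hu, fderiv_fderiv_comp_gradient hf hu] using
      isWeaklyDivFree_fderiv_apply (J := fun y => fderiv ℝ f (∇ u y)) (hDf.comp hgrad) hdiv e
  rw [← gradient_fderiv_apply hu]
  exact gradient_eq_zero_of_isWeaklyDivFree hE
    ((hDf.continuous_fderiv one_ne_zero).comp hgrad.continuous)
    (fun x a b => hf.contDiffAt.isSymmSndFDerivAt (by simp) a b) (fun x => hpos (∇ u x))
    ((hu.fderiv_right (by norm_num)).clm_apply contDiff_const) hlin hg hg' hgM hle x

theorem fderiv_gradient_eq_zero (b : OrthonormalBasis (Fin 2) ℝ E) (hf : ContDiff ℝ 2 f)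
    (hpos : ∀ p a, a ≠ 0 → 0 < fderiv ℝ (fderiv ℝ f) p a a) (hu : ContDiff ℝ 2 u)
    (hdiv : ∀ x, ∑ i, fderiv ℝ (fun y => fderiv ℝ f (∇ u y)) x (b i) (b i) = 0)
    (hg : ContDiff ℝ 1 g) (hg' : ∀ t, 0 < deriv g t) (hgM : ∀ t, |g t| ≤ M)
    (hle : ∀ x a, fderiv ℝ (fderiv ℝ f) (∇ u x) a a ≤
      C * deriv g (fderiv ℝ u x (b 1)) * ‖a‖ ^ 2)
    (x : E) : fderiv ℝ (∇ u) x = 0 := by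
  have hE : Module.finrank ℝ E ≤ 2 := by simp [Module.finrank_eq_card_basis b.toBasis]
  have hflux : ContDiff ℝ 1 fun y => fderiv ℝ f (∇ u y) :=
    (hf.fderiv_right (by norm_num)).comp (contDiff_gradient hu (by norm_num))
  refine eq_zero_of_sum_form_eq_zero b (hpos (∇ u x)) (fun a c => ?_) ?_ ?_
  · exact (inner_fderiv_gradient_comm hu x a c).trans (real_inner_comm _ _)
  · simpa only [fderiv_fderiv_comp_gradient hf hu] using hdiv x
  · exact fderiv_gradient_apply_eq_zero hE hf hpos hu
      (isWeaklyDivFree_of_sum_fderiv_eq_zero (μ := volume) b hflux hdiv) (b 1) hg hg' hgM hle x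

end EulerLagrange

section LogarithmicWeight

/-- The bounded increasing function composed with `∂₂u` in the test function. Since `arsinh t` grows
like `log |t|`, its derivative decays like `1 / (|t| log² |t|)`. -/
def arctanArsinh (t : ℝ) : ℝ := arctan (arsinh t)

lemma contDiff_arctanArsinh {n : WithTop ℕ∞} : ContDiff ℝ n arctanArsinh :=
  contDiff_arctan.comp contDiff_arsinh

lemma abs_arctanArsinh_le (t : ℝ) : |arctanArsinh t| ≤ π / 2 :=
  abs_le.2 ⟨(neg_pi_div_two_lt_arctan _).le, (arctan_lt_pi_div_two _).le⟩

lemma deriv_arctanArsinh (t : ℝ) :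
    deriv arctanArsinh t = ((1 + arsinh t ^ 2) * √(1 + t ^ 2))⁻¹ := by
  rw [mul_inv, ← one_div]
  exact ((hasDerivAt_arctan (arsinh t)).comp t (hasDerivAt_arsinh t)).deriv

lemma deriv_arctanArsinh_pos (t : ℝ) : 0 < deriv arctanArsinh t := by
  rw [deriv_arctanArsinh]
  positivity

lemma sqrt_one_add_sq_le (t : ℝ) : √(1 + t ^ 2) ≤ 1 + |t| := by
  refine sqrt_le_iff.2 ⟨by positivity, ?_⟩
  rw [add_sq, sq_abs]
  linarith [abs_nonneg t]

lemma abs_arsinh (t : ℝ) : |arsinh t| = arsinh |t| := by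
  rcases abs_cases t with ⟨h, ht⟩ | ⟨h, ht⟩
  · rw [h, abs_of_nonneg (arsinh_nonneg_iff.2 ht)]
  · rw [h, arsinh_neg, abs_of_neg (arsinh_neg_iff.2 ht)]

lemma abs_arsinh_le (t : ℝ) : |arsinh t| ≤ log 2 + log (1 + |t|) := by
  have hle := sqrt_one_add_sq_le |t|
  rw [abs_abs] at hle
  rw [abs_arsinh, arsinh, ← log_mul two_ne_zero (by positivity)]
  exact log_le_log (by positivity) (by linarith)

lemma arsinh_sq_le (t : ℝ) : arsinh t ^ 2 ≤ 2 + 2 * log (1 + |t|) ^ 2 :=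
  calc arsinh t ^ 2 ≤ (1 + log (1 + |t|)) ^ 2 :=
        sq_le_sq' (by linarith [neg_abs_le (arsinh t), abs_arsinh_le t, log_two_lt_d9])
          (by linarith [le_abs_self (arsinh t), abs_arsinh_le t, log_two_lt_d9])
    _ ≤ 2 + 2 * log (1 + |t|) ^ 2 := by linarith [sq_nonneg (log (1 + |t|) - 1)]

lemma log_one_add_sq_le {s : ℝ} (hs : 0 ≤ s) : log (1 + s) ^ 2 ≤ 1 + s * log (1 + s) ^ 2 := by
  rcases le_total s 1 with h | h
  · have hlog : log (1 + s) ≤ 1 := by linarith [log_le_sub_one_of_pos (show 0 < 1 + s by linarith)]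
    have hsq : log (1 + s) ^ 2 ≤ 1 := pow_le_one₀ (log_nonneg (by linarith)) hlog
    linarith [mul_nonneg hs (sq_nonneg (log (1 + s)))]
  · linarith [le_mul_of_one_le_left (sq_nonneg (log (1 + s))) h]

lemma le_one_add_mul_log_one_add_sq {s : ℝ} (hs : 0 ≤ s) :
    s ≤ 1 + 4 * (s * log (1 + s) ^ 2) := by
  rcases le_total s 1 with h | h
  · linarith [mul_nonneg hs (sq_nonneg (log (1 + s)))]
  · have hlog : 1 / 2 ≤ log (1 + s) :=
      calc (1 : ℝ) / 2 ≤ log 2 := by linarith [log_two_gt_d9]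
        _ ≤ log (1 + s) := log_le_log two_pos (by linarith)
    have hsq : (1 / 2) ^ 2 ≤ log (1 + s) ^ 2 := pow_le_pow_left₀ (by norm_num) hlog 2
    linarith [mul_le_mul_of_nonneg_left hsq hs]

lemma one_add_arsinh_sq_mul_sqrt_le (t : ℝ) :
    (1 + arsinh t ^ 2) * √(1 + t ^ 2) ≤ 16 * (1 + |t| * log (1 + |t|) ^ 2) :=
  calc (1 + arsinh t ^ 2) * √(1 + t ^ 2)
      ≤ (3 + 2 * log (1 + |t|) ^ 2) * (1 + |t|) :=
        mul_le_mul (by linarith [arsinh_sq_le t]) (sqrt_one_add_sq_le t) (sqrt_nonneg _)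
          (by positivity)
    _ = 3 + 3 * |t| + 2 * log (1 + |t|) ^ 2 + 2 * (|t| * log (1 + |t|) ^ 2) := by ring
    _ ≤ 16 * (1 + |t| * log (1 + |t|) ^ 2) := by
        linarith [log_one_add_sq_le (abs_nonneg t), le_one_add_mul_log_one_add_sq (abs_nonneg t)]

lemma inv_one_add_le_mul_deriv_arctanArsinh {K r t : ℝ} (hr : 0 ≤ r)
    (h : |t| * log (1 + |t|) ^ 2 ≤ K * (1 + r)) :
    (1 + r)⁻¹ ≤ 16 * (1 + K) * deriv arctanArsinh t := by
  rw [deriv_arctanArsinh, ← div_eq_mul_inv, inv_eq_one_div,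
    div_le_div_iff₀ (by positivity) (by positivity), one_mul]
  calc (1 + arsinh t ^ 2) * √(1 + t ^ 2)
      ≤ 16 * (1 + |t| * log (1 + |t|) ^ 2) := one_add_arsinh_sq_mul_sqrt_le t
    _ ≤ 16 * (1 + K) * (1 + r) := by linarith

end LogarithmicWeight

section Plane

lemma fderiv_fderiv_apply_le {V : Type*} [NormedAddCommGroup V] [NormedSpace ℝ V] (f : V → ℝ)
    (p a : V) : fderiv ℝ (fderiv ℝ f) p a a ≤ ‖iteratedFDeriv ℝ 2 f p‖ * ‖a‖ ^ 2 :=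
  calc fderiv ℝ (fderiv ℝ f) p a a = iteratedFDeriv ℝ 2 f p ![a, a] := by
        simp [iteratedFDeriv_two_apply]
    _ ≤ ‖iteratedFDeriv ℝ 2 f p ![a, a]‖ := le_abs_self _
    _ ≤ ‖iteratedFDeriv ℝ 2 f p‖ * ‖a‖ ^ 2 := by
        simpa [Fin.prod_univ_two, sq] using (iteratedFDeriv ℝ 2 f p).le_opNorm ![a, a]

lemma hess_eq_fderiv_fderiv (f : E2 → ℝ) (p a : E2) :
    Hess f p a = fderiv ℝ (fderiv ℝ f) p a a := by
  simp [Hess, iteratedFDeriv_two_apply]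

lemma basisFun_eq_ee (i : Fin 2) : EuclideanSpace.basisFun (Fin 2) ℝ i = ee i :=
  EuclideanSpace.basisFun_apply _ _ _

lemma abs_pd_le_norm_gradient (u : E2 → ℝ) (i : Fin 2) (x : E2) : |pd u i x| ≤ ‖∇ u x‖ := by
  simpa [norm_gradient, pd, ee] using (fderiv ℝ u x).le_opNorm (ee i)

lemma sum_fderiv_apply_basisFun_eq_zero {f u : E2 → ℝ} (hf : ContDiff ℝ 2 f)
    (hu : ContDiff ℝ 2 u) (h : solves f u) (x : E2) :
    ∑ i, fderiv ℝ (fun y => fderiv ℝ f (∇ u y)) x (EuclideanSpace.basisFun (Fin 2) ℝ i)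
      (EuclideanSpace.basisFun (Fin 2) ℝ i) = 0 := by
  have hflux : DifferentiableAt ℝ (fun y => fderiv ℝ f (∇ u y)) x :=
    ((hf.fderiv_right (m := 1) (by norm_num)).comp
      (contDiff_gradient hu (by norm_num))).differentiable one_ne_zero x
  rw [← h x]
  refine Finset.sum_congr rfl fun i _ => ?_
  rw [basisFun_eq_ee, fderiv_clm_apply hflux (differentiableAt_const _)]
  simp

lemma fderiv_fderiv_gradient_apply_le {f u : E2 → ℝ} {Lam K : ℝ} (hLam : 0 ≤ Lam)
    (hgrow : ∀ p : E2, ‖iteratedFDeriv ℝ 2 f p‖ ≤ Lam / (1 + ‖p‖)) (hK : 0 ≤ K) {x : E2}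
    (hbd : |pd u 1 x| * log (1 + |pd u 1 x|) ^ 2 ≤ K * (|pd u 0 x| + 1)) (a : E2) :
    fderiv ℝ (fderiv ℝ f) (∇ u x) a a ≤
      Lam * (16 * (1 + K)) * deriv arctanArsinh (pd u 1 x) * ‖a‖ ^ 2 := by
  have hlog : |pd u 1 x| * log (1 + |pd u 1 x|) ^ 2 ≤ K * (1 + ‖∇ u x‖) :=
    hbd.trans (mul_le_mul_of_nonneg_left (by linarith [abs_pd_le_norm_gradient u 0 x]) hK)
  calc fderiv ℝ (fderiv ℝ f) (∇ u x) a a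
      ≤ ‖iteratedFDeriv ℝ 2 f (∇ u x)‖ * ‖a‖ ^ 2 := fderiv_fderiv_apply_le f _ a
    _ ≤ Lam * (1 + ‖∇ u x‖)⁻¹ * ‖a‖ ^ 2 := by
        rw [← div_eq_mul_inv]
        gcongr
        exact hgrow _
    _ ≤ Lam * (16 * (1 + K) * deriv arctanArsinh (pd u 1 x)) * ‖a‖ ^ 2 := by
        gcongr
        exact inv_one_add_le_mul_deriv_arctanArsinh (norm_nonneg _) hlog
    _ = Lam * (16 * (1 + K)) * deriv arctanArsinh (pd u 1 x) * ‖a‖ ^ 2 := by ring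

end Plane

theorem statement9 (f u : E2 → ℝ)
    (hf : ContDiff ℝ 2 f)
    (hpos : ∀ p q : E2, q ≠ 0 → 0 < Hess f p q)
    (Lam : ℝ) (hLam : 0 < Lam)
    (hgrow : ∀ p : E2, ‖iteratedFDeriv ℝ 2 f p‖ ≤ Lam / (1 + ‖p‖))
    (hu : ContDiff ℝ 2 u) (heq : solves f u)
    (K : ℝ) (hK : 0 < K)
    (hbd : ∀ x : E2, |pd u 1 x| * (Real.log (1 + |pd u 1 x|)) ^ 2 ≤ K * (|pd u 0 x| + 1)) :
    ∃ a b c : ℝ, ∀ x : E2, u x = a * x 0 + b * x 1 + c := by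
  have hflat : ∀ x, fderiv ℝ (∇ u) x = 0 :=
    fderiv_gradient_eq_zero (EuclideanSpace.basisFun (Fin 2) ℝ) hf
      (fun p a ha => hess_eq_fderiv_fderiv f p a ▸ hpos p a ha) hu
      (sum_fderiv_apply_basisFun_eq_zero hf hu heq) contDiff_arctanArsinh deriv_arctanArsinh_pos
      abs_arctanArsinh_le fun x a => by
        rw [basisFun_eq_ee]
        exact fderiv_fderiv_gradient_apply_le hLam.le hgrow hK.le (hbd x) a
  have hgrad : Differentiable ℝ (∇ u) :=
    (contDiff_gradient (m := 1) hu (by norm_num)).differentiable one_ne_zero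
  have hconst : ∀ x, ∇ u x = ∇ u 0 := fun x => is_const_of_fderiv_eq_zero hgrad hflat x 0
  refine ⟨∇ u 0 0, ∇ u 0 1, u 0, fun x => ?_⟩
  rw [eq_inner_add_of_gradient_eq (hu.differentiable two_ne_zero) hconst x]
  simp [-inner_gradient_left, PiLp.inner_apply, Fin.sum_univ_two, mul_comm]
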